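/- Every 9×13 sign matrix has at most 79 3-neighborly plain travels. (Equivalently, every rank 9 Lawrence oriented matroid on 13 elements has at most c_9(13,3) = 158 3-neighborly reorientations.) -/

import Mathlib

/-- An `r × n` sign matrix: entries in `{+1, -1}` (1-indexed: `1 ≤ i ≤ r`, `1 ≤ j ≤ n`). -/
def IsSignMatrix (r n : ℕ) (A : ℕ → ℕ → ℤ) : Prop :=
  ∀ i j, 1 ≤ i → i ≤ r → 1 ≤ j → j ≤ n → A i j = 1 ∨ A i j = -1

/-- `A_S`: the matrix obtained from `A` by negating every entry of each column in `S`. -/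
def reorient (A : ℕ → ℕ → ℤ) (S : Finset ℕ) : ℕ → ℕ → ℤ :=
  fun i j => if j ∈ S then -A i j else A i j

/-- The first column `c'` with `c < c' ≤ n` where row `i` changes sign relative to
entry `a_{i,c}`, if such a column exists. -/
def rowChange (A : ℕ → ℕ → ℤ) (n i c : ℕ) : Option ℕ :=
  (List.range (n + 1)).find? fun c' => decide (c < c' ∧ A i c' ≠ A i c)

/-- `ttEntry A n i` is the column at which the top travel of `A` enters row `i`
(rows and columns 1-indexed): the travel enters row 1 at column 1, and, having entered
row `i` at column `c`, it enters row `i+1` at the first sign change of row `i` after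
column `c` (if any).  The value `some` at the "virtual" row `r+1` means the top travel
had a sign change in the bottom row `r`, i.e. the top travel is positive. -/
def ttEntry (A : ℕ → ℕ → ℤ) (n : ℕ) : ℕ → Option ℕ
  | 0 => none
  | 1 => some 1
  | i + 2 => (ttEntry A n (i + 1)).bind (rowChange A n (i + 1))

/-- The top travel of the `r × n` sign matrix `A` is positive: it contains two
horizontally consecutive entries of row `r` with opposite signs. -/
def ttPositive (A : ℕ → ℕ → ℤ) (r n : ℕ) : Prop :=
  (ttEntry A n (r + 1)).isSome

/-- `A` is `k`-neighborly: for every set `S` of at most `k` columns, the top travel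
of `A_S` is not positive. -/
def IsNeighborly (A : ℕ → ℕ → ℤ) (r n k : ℕ) : Prop :=
  ∀ S : Finset ℕ, S ⊆ Finset.Icc 1 n → S.card ≤ k → ¬ ttPositive (reorient A S) r n

/-- A plain travel of an `r × n` sign matrix, identified with the set `D` of columns of
its downward (vertical) moves: the columns `2 ≤ j₁ < ⋯ < j_{s-1} ≤ n` with `s ≤ r`. -/
def IsPlainTravel (r n : ℕ) (D : Finset ℕ) : Prop :=
  D ⊆ Finset.Icc 2 n ∧ D.card ≤ r - 1

/-- The top travel of `A` follows exactly the plain travel with downward-move columns `D`: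
it makes its downward moves precisely at the columns of `D` (entering rows `2, …, |D|+1`
there) and then ends at column `n` in row `|D|+1` without a further sign change. -/
def ttFollows (A : ℕ → ℕ → ℤ) (n : ℕ) (D : Finset ℕ) : Prop :=
  ttEntry A n (D.card + 2) = none ∧
  ∀ c, c ∈ D ↔ ∃ i, 2 ≤ i ∧ i ≤ D.card + 1 ∧ ttEntry A n i = some c

/-- The plain travel `D` of `A` is `k`-neighborly: there is a set `R` of columns such that
the top travel of `A_R` follows exactly the path `D` and `A_R` is a `k`-neighborly matrix. -/
def IsNeighborlyTravel (A : ℕ → ℕ → ℤ) (r n k : ℕ) (D : Finset ℕ) : Prop :=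
  ∃ R : Finset ℕ, R ⊆ Finset.Icc 1 n ∧ ttFollows (reorient A R) n D ∧
    IsNeighborly (reorient A R) r n k

/-!
Moving down at the first sign change is optimal, so a matrix fails to be `k`-neighborly as soon as
some travel, after at most `k` reorientations, moves down at sign changes and leaves row `r`. Since
a travel moves right in every row, it must enter row `i` in one of the columns `i, …, n - r - 1 + i`
to do so. Choosing a reorientation `R` column by column, it is therefore enough to remember the
signs of row `i` in a window of `n - r - 1` columns, and the least numbers of further reorientations
with which the row is entered at each sign up to each column of the window. A matrix changes this
finite state only by comparing the rows `i` and `i + 1` inside the window. The number of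
`k`-neighborly reorientations is thus a number of paths in a finite automaton, to be maximised over
all sequences of comparisons. A branch and bound search does this: it maintains the collection of
all states reached so far and stops where the maxima of the single states already add up to at most
the claimed bound. Each travel belongs to a reorientation with `1 ∉ R`, as complementing `R` changes
no travel.
-/

section TopTravel

variable {r n k i c d : ℕ} {A B : ℕ → ℕ → ℤ} {D D' R : Finset ℕ}

theorem rowChange_mem_Icc (h : rowChange A n i c = some d) : d ∈ Finset.Icc 1 n := by
  obtain ⟨hd, hdn, -⟩ := List.find?_range_eq_some.mp h
  have hcd := (of_decide_eq_true hd).1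
  have := List.mem_range.mp hdn
  rw [Finset.mem_Icc]
  omega

theorem exists_rowChange_le (hcd : c < d) (hdn : d ≤ n) (hne : A i d ≠ A i c) :
    ∃ e ≤ d, rowChange A n i c = some e := by
  cases h : rowChange A n i c with
  | none =>
    have := List.find?_range_eq_none.mp h d (by omega)
    simp [hcd, hne] at this
  | some e =>
    refine ⟨e, not_lt.mp fun hde => ?_, rfl⟩
    have := (List.find?_range_eq_some.mp h).2.2 d hde
    simp [hcd, hne] at this

theorem ttEntry_mem_Icc (hn : 1 ≤ n) (h : ttEntry A n i = some c) : c ∈ Finset.Icc 1 n := by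
  match i with
  | 0 => simp [ttEntry] at h
  | 1 => simp_all [ttEntry, eq_comm]
  | i + 2 =>
    obtain ⟨d, -, hd⟩ := Option.bind_eq_some_iff.mp h
    exact rowChange_mem_Icc hd

theorem ttEntry_eq_of_eq_neg (hn : 1 ≤ n) (h : ∀ i, ∀ c ∈ Finset.Icc 1 n, B i c = -A i c) :
    ∀ i, ttEntry B n i = ttEntry A n i
  | 0 => rfl
  | 1 => rfl
  | i + 2 => by
    simp only [ttEntry, ttEntry_eq_of_eq_neg hn h (i + 1)]
    refine Option.bind_congr fun c hc => List.find?_congr fun d hd => ?_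
    have hcn := ttEntry_mem_Icc hn hc
    rw [decide_eq_decide]
    refine and_congr_right fun hcd => ?_
    have hdn : d ∈ Finset.Icc 1 n := by
      simp only [Finset.mem_Icc, List.mem_range] at hcn hd ⊢
      omega
    rw [h _ c hcn, h _ d hdn, ne_eq, neg_inj]

theorem ttFollows.of_eq_neg (hn : 1 ≤ n) (h : ∀ i, ∀ c ∈ Finset.Icc 1 n, B i c = -A i c)
    (hA : ttFollows A n D) : ttFollows B n D := by
  simpa only [ttFollows, ttEntry_eq_of_eq_neg hn h] using hA

theorem IsNeighborly.of_eq_neg (hn : 1 ≤ n) (h : ∀ i, ∀ c ∈ Finset.Icc 1 n, B i c = -A i c)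
    (hA : IsNeighborly A r n k) : IsNeighborly B r n k := by
  intro S hS hSk hpos
  refine hA S hS hSk ?_
  have hneg : ∀ i, ∀ c ∈ Finset.Icc 1 n, reorient B S i c = -reorient A S i c := by
    intro i c hc
    by_cases hcS : c ∈ S <;> simp [reorient, hcS, h i c hc]
  rwa [ttPositive, ttEntry_eq_of_eq_neg hn hneg] at hpos

theorem reorient_Icc_sdiff (hc : c ∈ Finset.Icc 1 n) :
    reorient A (Finset.Icc 1 n \ R) i c = -reorient A R i c := by
  by_cases hcR : c ∈ R <;> simp [reorient, hcR, hc]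

theorem IsNeighborlyTravel.exists_one_notMem (hn : 1 ≤ n) (h : IsNeighborlyTravel A r n k D) :
    ∃ R ⊆ Finset.Icc 1 n, 1 ∉ R ∧ IsNeighborly (reorient A R) r n k ∧
      ttFollows (reorient A R) n D := by
  obtain ⟨R, hR, hD, hk⟩ := h
  by_cases h1 : 1 ∈ R
  · have hneg : ∀ i, ∀ c ∈ Finset.Icc 1 n,
        reorient A (Finset.Icc 1 n \ R) i c = -reorient A R i c :=
      fun i c hc => reorient_Icc_sdiff hc
    exact ⟨Finset.Icc 1 n \ R, Finset.sdiff_subset, by simp [h1], hk.of_eq_neg hn hneg,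
      hD.of_eq_neg hn hneg⟩
  · exact ⟨R, hR, h1, hk, hD⟩

theorem ttEntry_add_eq_none (h : ttEntry A n (i + 1) = none) : ∀ m, ttEntry A n (i + 1 + m) = none
  | 0 => h
  | m + 1 => by
    rw [show i + 1 + (m + 1) = i + m + 2 by omega, ttEntry, show i + m + 1 = i + 1 + m by omega,
      ttEntry_add_eq_none h m, Option.bind_none]

theorem ttFollows.mem_iff (h : ttFollows A n D) : c ∈ D ↔ ∃ i ≥ 2, ttEntry A n i = some c := by
  rw [h.2 c]
  refine exists_congr fun i => and_congr_right fun _ => and_iff_right_of_imp fun hi => ?_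
  by_contra hlt
  have := ttEntry_add_eq_none h.1 (i - (D.card + 2))
  rw [show D.card + 1 + 1 + (i - (D.card + 2)) = i by omega, hi] at this
  exact Option.some_ne_none _ this

theorem ttFollows.unique (h : ttFollows A n D) (h' : ttFollows A n D') : D = D' :=
  Finset.ext fun _ => h.mem_iff.trans h'.mem_iff.symm

theorem ncard_le_of_forall_card_le {N : ℕ} {T : Set (Finset ℕ)} (hn : 1 ≤ n)
    (hT : ∀ D ∈ T, IsNeighborlyTravel A r n k D)
    (hN : ∀ X : Finset (Finset ℕ),
      (∀ R ∈ X, R ⊆ Finset.Icc 1 n ∧ 1 ∉ R ∧ IsNeighborly (reorient A R) r n k) → X.card ≤ N) :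
    T.ncard ≤ N := by
  classical
  let X := {R ∈ (Finset.Icc 1 n).powerset | 1 ∉ R ∧ IsNeighborly (reorient A R) r n k}
  have hX : X.card ≤ N := hN X (by simp [X])
  choose! f hf using fun D hD => (hT D hD).exists_one_notMem hn
  refine le_trans ?_ (Set.ncard_coe_finset X ▸ hX)
  refine Set.ncard_le_ncard_of_injOn f ?_ ?_ X.finite_toSet
  · intro D hD
    obtain ⟨hR, h1, hk, -⟩ := hf D hD
    simpa [X] using ⟨hR, h1, hk⟩
  · intro D hD D' hD' hDD'
    exact (hf D hD).2.2.2.unique (hDD' ▸ (hf D' hD').2.2.2)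

end TopTravel

section Reaches

variable {r n k c i j : ℕ} {t : Bool} {A M : ℕ → ℕ → ℤ} {B B' : ℕ → ℕ → Bool} {R S : Finset ℕ}

/-- The entries of an integer matrix as signs, `true` standing for `1`. -/
def signOf (A : ℕ → ℕ → ℤ) (i j : ℕ) : Bool := decide (A i j = 1)

/-- The reorientation of a matrix of signs: the columns in `S` are negated. -/
def flipCols (B : ℕ → ℕ → Bool) (S : Finset ℕ) (i j : ℕ) : Bool := B i j ^^ decide (j ∈ S)

/-- Some travel that moves down at sign changes, not necessarily at the first ones, enters row `i`
in one of the columns `1, …, j`, at an entry of sign `t`. Row `0` is a virtual row in which every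
sign is met from the outset. -/
inductive Reaches (B : ℕ → ℕ → Bool) : ℕ → ℕ → Bool → Prop
  | zero (j : ℕ) (t : Bool) : Reaches B 0 j t
  | entry {i j : ℕ} : Reaches B i j (!B i (j + 1)) → Reaches B (i + 1) (j + 1) (B (i + 1) (j + 1))
  | wait {i j : ℕ} {t : Bool} : Reaches B i j t → Reaches B i (j + 1) t

theorem Reaches.congr (h : Reaches B i j t) (hB : ∀ i, ∀ l ≤ j, B i l = B' i l) :
    Reaches B' i j t := by
  induction h with
  | zero j t => exact .zero j t
  | @entry i j _ ih =>
    rw [hB _ _ le_rfl] at ih ⊢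
    exact .entry (ih fun i l hl => hB i l (by omega))
  | wait _ ih => exact .wait (ih fun i l hl => hB i l (by omega))

/- The top travel moves down as early as possible, so it stays weakly to the left of every other
travel. -/
theorem Reaches.exists_ttEntry (hij : Reaches B (i + 1) j t) (hi : i ≤ r) (hj : j ≤ n)
    (hB : ∀ i ∈ Finset.Icc 1 r, ∀ c ∈ Finset.Icc 1 n, B i c = signOf M i c) :
    ∃ p ∈ Finset.Icc 1 j, B (i + 1) p = t ∧ ∃ c ∈ Finset.Icc 1 p, ttEntry M n (i + 1) = some c := by
  generalize hi' : i + 1 = i' at hij ⊢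
  induction hij generalizing i with
  | zero => omega
  | wait _ ih =>
    obtain ⟨p, hp, h⟩ := ih hi (by omega) hi'
    exact ⟨p, Finset.Icc_subset_Icc_right (Nat.le_succ _) hp, h⟩
  | @entry i' j _ ih =>
    obtain rfl : i = i' := by omega
    refine ⟨j + 1, by simp, rfl, ?_⟩
    cases i with
    | zero => exact ⟨1, by simp, rfl⟩
    | succ i =>
      obtain ⟨p, hp, hpt, c, hc, hce⟩ := ih (i := i) (by omega) (by omega) rfl
      rw [Finset.mem_Icc] at hp hc
      have hne : M (i + 1) p ≠ M (i + 1) (j + 1) := by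
        intro hM
        rw [hB (i + 1) (by simp; omega) (j + 1) (by simp; omega), signOf, ← hM, ← signOf,
          ← hB (i + 1) (by simp; omega) p (by simp; omega)] at hpt
        exact (Bool.eq_not_self _).mp hpt
      obtain ⟨e, hej, he⟩ : ∃ e ≤ j + 1, rowChange M n (i + 1) c = some e := by
        by_cases hcp : M (i + 1) p = M (i + 1) c
        · exact exists_rowChange_le (by omega) hj (hcp ▸ hne.symm)
        · obtain ⟨e, hep, he⟩ := exists_rowChange_le (n := n)
            (lt_of_le_of_ne hc.2 fun h => hcp (h ▸ rfl)) (by omega) hcp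
          exact ⟨e, by omega, he⟩
      refine ⟨e, Finset.mem_Icc.mpr ⟨(Finset.mem_Icc.mp (rowChange_mem_Icc he)).1, hej⟩, ?_⟩
      rw [ttEntry, hce, Option.bind_some, he]

theorem isSignMatrix_reorient (hA : IsSignMatrix r n A) : IsSignMatrix r n (reorient A S) := by
  intro i j hi hir hj hjn
  rcases hA i j hi hir hj hjn with h | h <;> by_cases hjS : j ∈ S <;> simp [reorient, h, hjS]

theorem signOf_reorient (hA : IsSignMatrix r n A) (hi : i ∈ Finset.Icc 1 r)
    (hj : j ∈ Finset.Icc 1 n) : signOf (reorient A S) i j = flipCols (signOf A) S i j := by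
  rw [Finset.mem_Icc] at hi hj
  rcases hA i j hi.1 hi.2 hj.1 hj.2 with h | h <;> by_cases hjS : j ∈ S <;>
    simp [signOf, flipCols, reorient, h, hjS]

/-- After reorienting at most `c` of the columns `1, …, j` some travel enters row `i` in one of
these columns, at an entry of sign `t`. -/
def FlipReaches (B : ℕ → ℕ → Bool) (c i j : ℕ) (t : Bool) : Prop :=
  ∃ S ⊆ Finset.Icc 1 j, S.card ≤ c ∧ Reaches (flipCols B S) i j t

theorem FlipReaches.zero (B : ℕ → ℕ → Bool) (c j : ℕ) (t : Bool) : FlipReaches B c 0 j t :=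
  ⟨∅, by simp, by simp, .zero j t⟩

theorem FlipReaches.wait : FlipReaches B c i j t → FlipReaches B c i (j + 1) t :=
  fun ⟨S, hS, hSc, h⟩ => ⟨S, hS.trans (Finset.Icc_subset_Icc_right (Nat.le_succ j)), hSc, h.wait⟩

theorem FlipReaches.entry (h : FlipReaches B c i j (!B i (j + 1))) :
    FlipReaches B c (i + 1) (j + 1) (B (i + 1) (j + 1)) := by
  obtain ⟨S, hS, hSc, h⟩ := h
  have hjS : j + 1 ∉ S := fun hj => by simpa using Finset.mem_Icc.mp (hS hj)
  have hfix : ∀ i, flipCols B S i (j + 1) = B i (j + 1) := by simp [flipCols, hjS]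
  refine ⟨S, hS.trans (Finset.Icc_subset_Icc_right (Nat.le_succ j)), hSc, ?_⟩
  rw [← hfix] at h ⊢
  exact h.entry

theorem FlipReaches.entry_flip (h : FlipReaches B c i j (B i (j + 1))) :
    FlipReaches B (c + 1) (i + 1) (j + 1) (!B (i + 1) (j + 1)) := by
  obtain ⟨S, hS, hSc, h⟩ := h
  have hflip : ∀ i, flipCols B (insert (j + 1) S) i (j + 1) = !B i (j + 1) := by simp [flipCols]
  refine ⟨insert (j + 1) S, Finset.insert_subset (by simp)
    (hS.trans (Finset.Icc_subset_Icc_right (Nat.le_succ j))), (Finset.card_insert_le _ _).trans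
    (Nat.succ_le_succ hSc), ?_⟩
  rw [← hflip]
  refine .entry (Reaches.congr (B := flipCols B S) ?_ fun i l hl => ?_)
  · rwa [hflip, Bool.not_not]
  · simp [flipCols, show l ≠ j + 1 by omega]

theorem IsNeighborly.not_flipReaches (hA : IsSignMatrix r n A)
    (h : IsNeighborly (reorient A R) r n k) (hc : c ≤ k) :
    ¬FlipReaches (flipCols (signOf A) R) c (r + 1) n t := by
  rintro ⟨S, hS, hSc, hSt⟩
  refine h S hS (hSc.trans hc) ?_
  have hsign : ∀ i ∈ Finset.Icc 1 r, ∀ j ∈ Finset.Icc 1 n,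
      flipCols (flipCols (signOf A) R) S i j = signOf (reorient (reorient A R) S) i j := by
    intro i hi j hj
    simp only [signOf_reorient (isSignMatrix_reorient hA) hi hj, flipCols,
      signOf_reorient hA hi hj]
  obtain ⟨-, -, -, c, -, hc⟩ := hSt.exists_ttEntry le_rfl le_rfl hsign
  rw [ttPositive, hc, Option.isSome_some]

end Reaches

section CostSound

variable {K i j m : ℕ} {g : Bool} {c d : ℕ × ℕ} {B : ℕ → ℕ → Bool}

/-- The invariant of a pair of costs: reorienting `c.1` (respectively `c.2`) of the columns
`1, …, j` suffices to enter row `i` in one of them at the sign `g` (respectively `!g`). Costs of at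
least `K` promise nothing. -/
def CostSound (K : ℕ) (B : ℕ → ℕ → Bool) (i : ℕ) (g : Bool) (j : ℕ) (c : ℕ × ℕ) : Prop :=
  (K ≤ c.1 ∨ FlipReaches B c.1 i j g) ∧ (K ≤ c.2 ∨ FlipReaches B c.2 i j !g)

/-- The costs after moving down in a column with entry `x` in the old and `y` in the new row,
from the costs `c` of the old row to the left of that column. -/
def entryCost (x y : Bool) (c : ℕ × ℕ) : ℕ × ℕ :=
  let d := bif x then c else c.swap
  bif y then (d.2 + 1, d.1) else (d.1, d.2 + 1)

theorem entryCost_sum (x y : Bool) (c : ℕ × ℕ) :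
    (entryCost x y c).1 + (entryCost x y c).2 = c.1 + c.2 + 1 := by
  cases x <;> cases y <;> simp only [entryCost, cond_true, cond_false, Prod.swap] <;> omega

theorem CostSound.wait (h : CostSound K B i g j c) : CostSound K B i g (j + 1) c :=
  ⟨h.1.imp_right .wait, h.2.imp_right .wait⟩

theorem CostSound.min (hc : CostSound K B i g j c) (hd : CostSound K B i g j d) :
    CostSound K B i g j (min c.1 d.1, min c.2 d.2) := by
  refine ⟨?_, ?_⟩
  · rcases min_choice c.1 d.1 with h | h
    exacts [by simpa only [h] using hc.1, by simpa only [h] using hd.1]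
  · rcases min_choice c.2 d.2 with h | h
    exacts [by simpa only [h] using hc.2, by simpa only [h] using hd.2]

theorem CostSound.entry (h : CostSound K B i g j c) (g' : Bool) :
    CostSound K B (i + 1) g' (j + 1)
      (entryCost (B i (j + 1) ^^ g) (B (i + 1) (j + 1) ^^ g') c) := by
  have keep : ∀ {a}, K ≤ a ∨ FlipReaches B a i j (!B i (j + 1)) →
      K ≤ a ∨ FlipReaches B a (i + 1) (j + 1) (B (i + 1) (j + 1)) := Or.imp_right .entry
  have flip : ∀ {a}, K ≤ a ∨ FlipReaches B a i j (B i (j + 1)) →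
      K ≤ a + 1 ∨ FlipReaches B (a + 1) (i + 1) (j + 1) (!B (i + 1) (j + 1)) :=
    Or.imp Nat.le_succ_of_le .entry_flip
  obtain ⟨h₁, h₂⟩ := h
  cases hx : B i (j + 1) <;> cases hy : B (i + 1) (j + 1) <;> cases g <;> cases g' <;>
    simp_all [CostSound, entryCost]

/- A step to the next row and column increases the sum of the two costs by one, whatever the
entries are. -/
theorem CostSound.exists_flipReaches (h : CostSound K B i g j c) (hc : c.1 + c.2 + m < 2 * K) :
    ∃ a < K, ∃ t, FlipReaches B a (i + m) (j + m) t := by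
  induction m generalizing i j g c with
  | zero =>
    obtain ⟨h₁, h₂⟩ := h
    rcases lt_or_ge c.1 K with hK | hK
    · exact ⟨c.1, hK, g, h₁.resolve_left (not_le.mpr hK)⟩
    · exact ⟨c.2, by omega, !g, h₂.resolve_left (by omega)⟩
  | succ m ih =>
    have := ih (h.entry false) (by rw [entryCost_sum]; omega)
    rwa [Nat.add_right_comm i, Nat.add_right_comm j] at this

end CostSound

section Force

variable {α β : Type}

/- These functions only apply `k` to their argument, but when the kernel evaluates them, it brings
the argument into normal form first. Equal arguments are then syntactically equal, so that the
kernel's cache turns the recursions below into dynamic programming. -/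

/-- Call-by-value application to a natural number. -/
def forceNat : ℕ → (ℕ → α) → α
  | 0, k => k 0
  | n + 1, k => k (n + 1)

/-- Call-by-value application to a Boolean. -/
def forceBool : Bool → (Bool → α) → α
  | false, k => k false
  | true, k => k true

/-- Call-by-value application to a pair. -/
def forcePair (p : ℕ × ℕ) (k : ℕ × ℕ → α) : α :=
  forceNat p.1 fun a => forceNat p.2 fun b => k (a, b)

/-- Call-by-value application to a list, given call-by-value application to its entries. -/
def forceList (f : β → (β → α) → α) : List β → (List β → α) → α
  | [], k => k []
  | a :: l, k => f a fun a => forceList f l fun l => k (a :: l)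

theorem forceNat_eq (n : ℕ) (k : ℕ → α) : forceNat n k = k n := by
  cases n <;> rfl

theorem forceBool_eq (b : Bool) (k : Bool → α) : forceBool b k = k b := by
  cases b <;> rfl

theorem forcePair_eq (p : ℕ × ℕ) (k : ℕ × ℕ → α) : forcePair p k = k p := by
  simp only [forcePair, forceNat_eq]

theorem forceList_eq {f : β → (β → α) → α} (hf : ∀ a k, f a k = k a) (l : List β)
    (k : List β → α) : forceList f l k = k l := by
  induction l generalizing k with
  | nil => rfl
  | cons a l ih => rw [forceList, hf, ih]

end Force

section SweepState

/-- What a count of neighborly reorientations has to remember when the columns up to `i + w` have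
been treated: the signs of row `i` in the columns `i + 1, …, i + w`, and for each of the columns
`j = i, …, i + w` how many further reorientations among the columns `1, …, j` suffice to enter row
`i` in one of these columns at the sign `false`, respectively `true`. All signs are relative to a
sign `g`, which need not be remembered. -/
structure SweepState where
  signs : List Bool
  costs : List (ℕ × ℕ)

variable {K w i j m : ℕ} {g g' : Bool} {B : ℕ → ℕ → Bool} {R : Finset ℕ} {s : SweepState}

/-- Call-by-value application to a state. -/
def SweepState.force {α : Type} (s : SweepState) (k : SweepState → α) : α :=
  forceList forceBool s.signs fun xs => forceList forcePair s.costs fun cs => k ⟨xs, cs⟩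

theorem SweepState.force_eq {α : Type} (s : SweepState) (k : SweepState → α) : s.force k = k s := by
  simp only [force, forceList_eq forceBool_eq, forceList_eq forcePair_eq]

/-- The costs of the next row, from the signs `xs` and costs `cs` of the old row and the signs `ys`
of the next row; `d` are the costs of the next row one column further left. -/
def advance : ℕ × ℕ → List Bool → List Bool → List (ℕ × ℕ) → List (ℕ × ℕ)
  | d, x :: xs, y :: ys, c :: cs =>
    let e := entryCost x y c
    forcePair (min d.1 e.1, min d.2 e.2) fun d => d :: advance d xs ys cs
  | _, _, _, _ => []

/-- Negates all signs if the second one is `true`; this makes the signs of the next state, which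
lack the first one, start with `false`. -/
def relabel (ys : List Bool) : List Bool :=
  bif ys.tail.headD false then ys.map not else ys

/-- The state in the next row: `q` compares the two rows entry by entry, and `b` is the sign of the
old row in the first new column. -/
def SweepState.step (K : ℕ) (q : List Bool) (b : Bool) (s : SweepState) : SweepState :=
  let xs := s.signs ++ [b]
  let ys := relabel (List.zipWith xor xs q)
  ⟨ys.tail, advance (K, K) xs ys s.costs⟩

/-- Whether the costs in the last column can still reach `K` for both signs within `m` rows. -/
def SweepState.alive (K m : ℕ) (s : SweepState) : Bool :=
  let c := s.costs.getLastD (0, 0)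
  2 * K ≤ c.1 + c.2 + m

/-- The signs of row `i` in the `m` columns from `j` on, relative to `g`. -/
def rowSigns (B : ℕ → ℕ → Bool) (g : Bool) (i j m : ℕ) : List Bool :=
  (List.range' j m).map fun l => B i l ^^ g

/-- The comparison of the rows `i` and `i + 1` in the columns `i + 1, …, i + w + 1`, relative to
the first of these columns. -/
def rowWord (B : ℕ → ℕ → Bool) (w i : ℕ) : List Bool :=
  (List.range' (i + 1) (w + 1)).map fun j =>
    B i j ^^ B (i + 1) j ^^ (B i (i + 1) ^^ B (i + 1) (i + 1))

/-- The state records correct information about row `i` of the sign matrix `B`. -/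
structure SweepState.Describes (s : SweepState) (K w : ℕ) (B : ℕ → ℕ → Bool) (i : ℕ) (g : Bool) :
    Prop where
  signs_eq : s.signs = rowSigns B g i (i + 1) w
  costs_sound : List.Forall₂ (CostSound K B i g) (List.range' i (w + 1)) s.costs

theorem forall₂_range'_getLastD {β : Type} {P : ℕ → β → Prop} {l : List β} (b : β)
    (h : List.Forall₂ P (List.range' j (m + 1)) l) : P (j + m) (l.getLastD b) := by
  induction m generalizing j l b with
  | zero =>
    obtain ⟨c, l, hc, hl, rfl⟩ := List.forall₂_cons_left_iff.mp h
    cases hl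
    exact hc
  | succ m ih =>
    rw [List.range'_succ] at h
    obtain ⟨c, l, -, hl, rfl⟩ := List.forall₂_cons_left_iff.mp h
    rw [List.getLastD_cons]
    simpa only [Nat.add_assoc, Nat.add_comm 1] using ih c hl

theorem SweepState.Describes.alive (h : s.Describes K w B i g)
    (hB : ∀ a < K, ∀ t, ¬FlipReaches B a (i + m) (i + w + m) t) : s.alive K m = true := by
  refine decide_eq_true (not_lt.mp fun hlt => ?_)
  obtain ⟨a, ha, t, ht⟩ :=
    (forall₂_range'_getLastD (0, 0) h.costs_sound).exists_flipReaches hlt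
  exact hB a ha t ht

theorem forall₂_advance {d : ℕ × ℕ} {cs : List (ℕ × ℕ)}
    (hcs : List.Forall₂ (CostSound K B i g) (List.range' j m) cs)
    (hd : CostSound K B (i + 1) g' j d) :
    List.Forall₂ (CostSound K B (i + 1) g') (List.range' (j + 1) m)
      (advance d (rowSigns B g i (j + 1) m) (rowSigns B g' (i + 1) (j + 1) m) cs) := by
  induction m generalizing j d cs with
  | zero => cases hcs; exact .nil
  | succ m ih =>
    rw [List.range'_succ] at hcs
    obtain ⟨c, cs', hc, hcs', rfl⟩ := List.forall₂_cons_left_iff.mp hcs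
    have hd' := hd.wait.min (hc.entry g')
    rw [rowSigns, rowSigns, List.range'_succ, List.map_cons, List.map_cons, advance, forcePair_eq]
    exact .cons hd' (ih hcs' hd')

theorem map_xor_rowSigns (e : Bool) :
    (rowSigns B g i j m).map (xor e) = rowSigns B (e ^^ g) i j m := by
  simp only [rowSigns, List.map_map, Function.comp_def, Bool.xor_left_comm e]

theorem zipWith_xor_rowSigns : List.zipWith xor (rowSigns B g i (i + 1) (w + 1)) (rowWord B w i) =
    rowSigns B (B i (i + 1) ^^ B (i + 1) (i + 1) ^^ g) (i + 1) (i + 1) (w + 1) := by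
  rw [rowSigns, rowSigns, rowWord, List.zipWith_map_left, List.zipWith_map_right, List.zipWith_self]
  refine List.map_congr_left fun j _ => ?_
  cases B i j <;> cases g <;> simp

theorem exists_relabel_eq (ys : List Bool) : ∃ e, relabel ys = ys.map (xor e) := by
  cases h : ys.tail.headD false with
  | false => exact ⟨false, by rw [relabel, h, cond_false, funext Bool.false_xor, List.map_id']⟩
  | true => exact ⟨true, by rw [relabel, h, cond_true, funext Bool.true_xor]⟩

theorem flipCols_xor_flipCols {i' : ℕ} :
    (flipCols B R i j ^^ flipCols B R i' j) = (B i j ^^ B i' j) := by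
  cases h : decide (j ∈ R) <;> simp [flipCols, h]

theorem rowWord_flipCols : rowWord (flipCols B R) w i = rowWord B w i := by
  simp only [rowWord, flipCols_xor_flipCols]

/- That `g'` does not depend on `R` keeps reorientations with equal states comparable. -/
theorem SweepState.exists_describes_step (K w : ℕ) (B : ℕ → ℕ → Bool) (i : ℕ) (g : Bool)
    (s : SweepState) (b : Bool) : ∃ g', ∀ R, s.Describes K w (flipCols B R) i g →
      (flipCols B R i (i + w + 1) ^^ g) = b →
      (s.step K (rowWord B w i) b).Describes K w (flipCols B R) (i + 1) g' := by
  obtain ⟨e, he⟩ := exists_relabel_eq (List.zipWith xor (s.signs ++ [b]) (rowWord B w i))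
  refine ⟨e ^^ (B i (i + 1) ^^ B (i + 1) (i + 1) ^^ g), fun R hs hb => ?_⟩
  have hxs : s.signs ++ [b] = rowSigns (flipCols B R) g i (i + 1) (w + 1) := by
    rw [rowSigns, List.range'_concat, List.map_append, hs.signs_eq, ← hb, rowSigns]
    simp [Nat.add_right_comm]
  have hys : relabel (List.zipWith xor (s.signs ++ [b]) (rowWord B w i)) =
      rowSigns (flipCols B R) (e ^^ (B i (i + 1) ^^ B (i + 1) (i + 1) ^^ g))
        (i + 1) (i + 1) (w + 1) := by
    rw [he, hxs, ← rowWord_flipCols (R := R), zipWith_xor_rowSigns, map_xor_rowSigns,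
      flipCols_xor_flipCols]
  refine ⟨?_, ?_⟩
  · simp only [step, hys]
    rfl
  · simp only [step, hys]
    rw [hxs]
    exact forall₂_advance hs.costs_sound ⟨.inl le_rfl, .inl le_rfl⟩

end SweepState

section Search

variable {K w i m r N : ℕ} {g : Bool} {B : ℕ → ℕ → Bool} {s : SweepState}

/-- The number of ways to choose the signs of the columns to come such that the state stays alive
throughout, given the comparisons of consecutive rows. -/
def SweepState.count (K : ℕ) : List (List Bool) → SweepState → ℕ
  | [], s => bif s.alive K 0 then 1 else 0
  | q :: ws, s => bif s.alive K (ws.length + 1) then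
      (s.step K q false).count K ws + (s.step K q true).count K ws else 0

theorem SweepState.count_cons_le {q : List Bool} {ws : List (List Bool)} (s : SweepState) :
    s.count K (q :: ws) ≤ (s.step K q false).count K ws + (s.step K q true).count K ws := by
  rw [count]
  cases s.alive K (ws.length + 1)
  exacts [Nat.zero_le _, le_rfl]

theorem card_le_cond_alive {X : Finset (Finset ℕ)} (hr : i + m = r)
    (hs : ∀ R ∈ X, s.Describes K w (flipCols B R) i g)
    (hK : ∀ R ∈ X, ∀ a < K, ∀ t, ¬FlipReaches (flipCols B R) a r (r + w) t) (hN : X.card ≤ N) :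
    X.card ≤ bif s.alive K m then N else 0 := by
  subst hr
  rcases X.eq_empty_or_nonempty with rfl | ⟨R, hR⟩
  · exact Nat.zero_le _
  · have halive : s.alive K m = true :=
      (hs R hR).alive (by simpa only [Nat.add_right_comm] using hK R hR)
    rwa [halive]

theorem card_le_count {X : Finset (Finset ℕ)} (hr : i + m = r)
    (hX : ∀ R ∈ X, R ⊆ Finset.Icc 1 (r + w))
    (hs : ∀ R ∈ X, s.Describes K w (flipCols B R) i g)
    (hK : ∀ R ∈ X, ∀ a < K, ∀ t, ¬FlipReaches (flipCols B R) a r (r + w) t)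
    (hagree : ∀ R ∈ X, ∀ R' ∈ X, ∀ j ≤ i + w, j ∈ R ↔ j ∈ R') :
    X.card ≤ s.count K ((List.range' i m).map (rowWord B w)) := by
  induction m generalizing i g s X with
  | zero =>
    refine card_le_cond_alive hr hs hK (Finset.card_le_one.mpr fun R hR R' hR' => ?_)
    ext j
    by_cases hj : j ≤ i + w
    · exact hagree R hR R' hR' j hj
    · have hnot : ∀ Q ∈ X, j ∉ Q := fun Q hQ hjQ => by
        have := Finset.mem_Icc.mp (hX Q hQ hjQ)
        omega
      exact iff_of_false (hnot R hR) (hnot R' hR')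
  | succ m ih =>
    choose g' hg' using SweepState.exists_describes_step K w B i g s
    let σ : Finset ℕ → Bool := fun R => flipCols B R i (i + w + 1) ^^ g
    let ws := (List.range' (i + 1) m).map (rowWord B w)
    have hsub : ∀ b, {R ∈ X | σ R = b}.card ≤ (s.step K (rowWord B w i) b).count K ws := by
      intro b
      have hmem : ∀ R ∈ {R ∈ X | σ R = b}, R ∈ X ∧ σ R = b := fun R hR => Finset.mem_filter.mp hR
      refine ih (by omega) (fun R hR => hX R (hmem R hR).1)
        (fun R hR => hg' b R (hs R (hmem R hR).1) (hmem R hR).2)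
        (fun R hR => hK R (hmem R hR).1) fun R hR R' hR' j hj => ?_
      rcases Nat.lt_or_ge (i + w) j with hj' | hj'
      · obtain rfl : j = i + w + 1 := by omega
        simpa [σ, flipCols] using (hmem R hR).2.trans (hmem R' hR').2.symm
      · exact hagree R (hmem R hR).1 R' (hmem R' hR').1 j hj'
    rw [List.range'_succ, List.map_cons, SweepState.count, List.length_map, List.length_range']
    refine card_le_cond_alive hr hs hK ?_
    rw [← Finset.card_filter_add_card_filter_not (σ · = false)]
    simpa only [Bool.not_eq_false] using Nat.add_le_add (hsub false) (hsub true)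

/-- All lists of `n` signs. -/
def signLists (n : ℕ) : List (List Bool) := (List.replicate n [false, true]).sections

theorem mem_signLists {l : List Bool} (hl : l.length = m) : l ∈ signLists m := by
  subst hl
  induction l with
  | nil => simp [signLists]
  | cons b l ih =>
    rw [signLists, List.length_cons, List.replicate_succ, List.mem_sections]
    exact .cons (by cases b <;> simp) (List.mem_sections.mp ih)

/-- All possible comparisons of two consecutive rows in `w + 1` columns. -/
def rowWords (w : ℕ) : List (List Bool) := (signLists w).map (false :: ·)

theorem rowWord_mem_rowWords : rowWord B w i ∈ rowWords w := by
  rw [rowWord, List.range'_succ, List.map_cons, Bool.xor_self]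
  exact List.mem_map_of_mem (mem_signLists (by simp))

/-- The sum of `f` over the two states that follow `s`. -/
def SweepState.sumStep (K : ℕ) (f : SweepState → ℕ) (q : List Bool) (s : SweepState) : ℕ :=
  (s.step K q false).force f + (s.step K q true).force f

/-- An upper bound for `s.count K ws` over all lists `ws` of `m` comparisons. -/
def SweepState.best (K w : ℕ) : ℕ → SweepState → ℕ
  | 0, s => bif s.alive K 0 then 1 else 0
  | m + 1, s => bif s.alive K (m + 1) then
      ((rowWords w).map fun q => s.sumStep K (best K w m) q).foldr max 0 else 0

/-- A number by which states are sorted: equal collections of states should give equal lists. -/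
def SweepState.key (K : ℕ) (s : SweepState) : ℕ :=
  s.costs.foldr (fun c n => c.1 + (K + 1) * (c.2 + (K + 1) * n)) (s.signs.foldr Nat.bit 0)

/-- Branch and bound: checks that the states in `L` together have at most `N` continuations, for
every list of `m` comparisons. -/
def search (K w N : ℕ) : ℕ → List SweepState → Bool
  | 0, _ => false
  | m + 1, L => (rowWords w).all fun q =>
      (L.map (SweepState.sumStep K (SweepState.best K w m) q)).sum ≤ N ||
      forceList SweepState.force (L.flatMap fun s => [s.step K q false, s.step K q true]) fun L =>
      forceList (fun s k => k s)
        ((L.filter fun s => 0 < s.best K w m).insertionSort fun s s' => s.key K ≤ s'.key K)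
        (search K w N m)

theorem SweepState.count_le_best {ws : List (List Bool)} (hws : ∀ q ∈ ws, q ∈ rowWords w) :
    s.count K ws ≤ s.best K w ws.length := by
  induction ws generalizing s with
  | nil => exact le_rfl
  | cons q ws ih =>
    rw [count, List.length_cons, best]
    cases s.alive K (ws.length + 1)
    · exact le_rfl
    rw [List.forall_mem_cons] at hws
    refine le_trans ?_ (List.le_max_of_le (List.mem_map_of_mem hws.1) le_rfl)
    rw [sumStep, force_eq, force_eq]
    exact Nat.add_le_add (ih hws.2) (ih hws.2)

theorem sum_map_filter_pos {α : Type} {f h : α → ℕ} (hfh : ∀ a, f a ≤ h a) (l : List α) :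
    ((l.filter (0 < h ·)).map f).sum = (l.map f).sum := by
  induction l with
  | nil => rfl
  | cons a l ih =>
    by_cases ha : 0 < h a
    · simp [ha, ih]
    · simp [ha, ih, show f a = 0 by have := hfh a; omega]

theorem sum_count_le_of_search {ws : List (List Bool)} {L : List SweepState}
    (hL : search K w N ws.length L = true) (hws : ∀ q ∈ ws, q ∈ rowWords w) :
    (L.map (SweepState.count K ws)).sum ≤ N := by
  induction ws generalizing L with
  | nil => cases hL
  | cons q ws ih =>
    rw [List.forall_mem_cons] at hws
    have hq := List.all_eq_true.mp hL q hws.1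
    rw [Bool.or_eq_true, forceList_eq SweepState.force_eq, forceList_eq fun _ _ => rfl] at hq
    rcases hq with hq | hq
    · refine le_trans (List.sum_le_sum fun s _ => ?_) (of_decide_eq_true hq)
      refine (SweepState.count_cons_le s).trans ?_
      rw [SweepState.sumStep, SweepState.force_eq, SweepState.force_eq]
      exact Nat.add_le_add (SweepState.count_le_best hws.2) (SweepState.count_le_best hws.2)
    · have hN := ih hq hws.2
      rw [((List.perm_insertionSort _ _).map _).sum_eq,
        sum_map_filter_pos fun s => SweepState.count_le_best hws.2] at hN
      refine le_trans ?_ hN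
      rw [List.map_flatMap, List.flatMap_def, List.sum_flatten, List.map_map]
      exact List.sum_le_sum fun s _ => by simpa using SweepState.count_cons_le s

/-- The states in the virtual row `0`, where every sign is met without reorientations; the sign in
column `1` is taken as reference. -/
def startStates (w : ℕ) : List SweepState :=
  (signLists w).map fun l => ⟨false :: l, List.replicate (w + 2) (0, 0)⟩

theorem card_le_sum_card_filter {α β : Type} [DecidableEq β] {X : Finset α} {f : α → β} {l : List β}
    (h : ∀ a ∈ X, f a ∈ l) : X.card ≤ (l.map fun b => {a ∈ X | f a = b}.card).sum := by
  rw [Finset.sum_list_map_count, Finset.card_eq_sum_card_fiberwise (f := f) (t := l.toFinset)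
    fun a ha => by simpa using h a ha]
  refine Finset.sum_le_sum fun b hb => Nat.le_mul_of_pos_left _ ?_
  exact List.count_pos_iff.mpr (List.mem_toFinset.mp hb)

theorem describes_startState (hg : B 0 1 = g) :
    SweepState.Describes ⟨false :: rowSigns B g 0 2 w, List.replicate (w + 2) (0, 0)⟩
      K (w + 1) B 0 g where
  signs_eq := by
    rw [rowSigns, rowSigns, List.range'_succ, List.map_cons, hg, Bool.xor_self]
  costs_sound := by
    rw [List.forall₂_iff_get]
    exact ⟨by simp, by simp [CostSound, FlipReaches.zero]⟩

theorem mem_iff_mem_of_rowSigns_eq {R R' : Finset ℕ}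
    (h : rowSigns (flipCols B R) g i m w = rowSigns (flipCols B R') g i m w) {j : ℕ} (hmj : m ≤ j)
    (hjw : j < m + w) : j ∈ R ↔ j ∈ R' := by
  have := List.map_inj_left.mp h j (List.mem_range'_1.mpr ⟨hmj, hjw⟩)
  simpa [flipCols] using this

theorem card_le_count_startState {X : Finset (Finset ℕ)} {l : List Bool}
    (hX : ∀ R ∈ X, R ⊆ Finset.Icc 1 (r + (w + 1)) ∧ 1 ∉ R)
    (hK : ∀ R ∈ X, ∀ a < K, ∀ t, ¬FlipReaches (flipCols B R) a r (r + (w + 1)) t)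
    (hl : ∀ R ∈ X, rowSigns (flipCols B R) (B 0 1) 0 2 w = l) :
    X.card ≤ SweepState.count K ((List.range' 0 r).map (rowWord B (w + 1)))
      ⟨false :: l, List.replicate (w + 2) (0, 0)⟩ := by
  refine card_le_count (g := B 0 1) (Nat.zero_add r) (fun R hR => (hX R hR).1) (fun R hR => ?_) hK
    fun R hR R' hR' j hj => ?_
  · rw [← hl R hR]
    exact describes_startState (by simp [flipCols, (hX R hR).2])
  · by_cases hj2 : 2 ≤ j
    · exact mem_iff_mem_of_rowSigns_eq ((hl R hR).trans (hl R' hR').symm) hj2 (by omega)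
    · have hnot : ∀ Q ∈ X, j ∉ Q := fun Q hQ hjQ => by
        have := Finset.mem_Icc.mp ((hX Q hQ).1 hjQ)
        obtain rfl : j = 1 := by omega
        exact (hX Q hQ).2 hjQ
      exact iff_of_false (hnot R hR) (hnot R' hR')

theorem card_le_of_search {X : Finset (Finset ℕ)}
    (hN : search K (w + 1) N r (startStates w) = true)
    (hX : ∀ R ∈ X, R ⊆ Finset.Icc 1 (r + (w + 1)) ∧ 1 ∉ R)
    (hK : ∀ R ∈ X, ∀ a < K, ∀ t, ¬FlipReaches (flipCols B R) a r (r + (w + 1)) t) :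
    X.card ≤ N := by
  let φ : Finset ℕ → List Bool := fun R => rowSigns (flipCols B R) (B 0 1) 0 2 w
  let ws := (List.range' 0 r).map (rowWord B (w + 1))
  have hlen : ws.length = r := by simp [ws]
  have hws : ∀ q ∈ ws, q ∈ rowWords (w + 1) := by
    simp only [ws, List.mem_map]
    rintro _ ⟨i, -, rfl⟩
    exact rowWord_mem_rowWords
  calc X.card
    _ ≤ ((signLists w).map fun l => {R ∈ X | φ R = l}.card).sum :=
      card_le_sum_card_filter fun R _ => mem_signLists (by simp [φ, rowSigns])
    _ ≤ ((startStates w).map (SweepState.count K ws)).sum := by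
      rw [startStates, List.map_map]
      refine List.sum_le_sum fun l _ => card_le_count_startState ?_ ?_ ?_
      · exact fun R hR => hX R (Finset.mem_of_mem_filter R hR)
      · exact fun R hR => hK R (Finset.mem_of_mem_filter R hR)
      · exact fun R hR => (Finset.mem_filter.mp hR).2
    _ ≤ N := sum_count_le_of_search (hlen.symm ▸ hN) hws

end Search

theorem ncard_le_of_search {A : ℕ → ℕ → ℤ} {r w k N : ℕ} {T : Set (Finset ℕ)}
    (hA : IsSignMatrix r (r + w + 2) A) (hT : ∀ D ∈ T, IsNeighborlyTravel A r (r + w + 2) k D)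
    (hN : search (k + 1) (w + 1) N (r + 1) (startStates w) = true) : T.ncard ≤ N := by
  rw [show r + w + 2 = r + 1 + (w + 1) by omega] at hA hT
  refine ncard_le_of_forall_card_le (by omega) hT fun X hX => ?_
  exact card_le_of_search hN (fun R hR => ⟨(hX R hR).1, (hX R hR).2.1⟩) fun R hR a ha _ =>
    (hX R hR).2.2.not_flipReaches hA (Nat.le_of_lt_succ ha)

/- The parameters are `k + 1 = 4`, windows of `13 - 9 - 1 = 3` columns, and `10` changes of row from
the virtual row `0` to the virtual row `10`. -/
set_option maxRecDepth 100000 in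
theorem search_four_three : search 4 3 79 10 (startStates 2) = true := by
  decide +kernel

/-- Every 9×13 sign matrix has at most 79 3-neighborly plain travels. -/
theorem statement_17 (A : ℕ → ℕ → ℤ) (hA : IsSignMatrix 9 13 A) :
    {D : Finset ℕ | IsPlainTravel 9 13 D ∧ IsNeighborlyTravel A 9 13 3 D}.ncard ≤ 79 :=
  ncard_le_of_search (w := 2) hA (fun _ hD => hD.2) search_four_three
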